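/- Let N and L be positive integers, let x : Fin N → Bool, and let i ∈ Fin N with x i = false. Let θ = π/(2L). Define the 2×2 real-rotation matrix R(θ) = [[cos θ, −sin θ],[sin θ, cos θ]] viewed as a complex matrix, define M_x as the diagonal matrix over the index set Fin 2 × Fin N whose diagonal entry at (c, j) is 1 if c = 0 or x j = false, and 0 otherwise, and let A = M_x · (R(θ) ⊗ I_N), where ⊗ is the Kronecker product and I_N is the N×N identity. Then A^L applied (by matrix–vector multiplication) to the standard basis vector e_{(0,i)} equals the standard basis vector e_{(1,i)}. -/

import Mathlib

/-!
Because `x i = false`, the query `M_x` fixes every product state `|ψ⟩ ⊗ |i⟩`, so on these states one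
step `M_x (R(θ) ⊗ I)` acts as `R(θ)` on the control qubit alone. Hence `L` steps act on it as
`R(θ) ^ L = R(L θ) = R(π / 2)`, which sends `|0⟩` to `|1⟩`.
-/

open Matrix
open scoped Kronecker

section TensorVec

variable {R m n : Type*}

/-- The Kronecker product of two vectors: the product state `|v⟩ ⊗ |w⟩`, with coordinates indexed by
pairs in the same order as the rows and columns of a Kronecker product of matrices. -/
def tensorVec [Mul R] (v : m → R) (w : n → R) : m × n → R :=
  fun p => v p.1 * w p.2

theorem tensorVec_single_single [MulZeroClass R] [DecidableEq m] [DecidableEq n]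
    (c : m) (j : n) (a b : R) :
    tensorVec (Pi.single c a) (Pi.single j b) = Pi.single (c, j) (a * b) := by
  ext ⟨c', j'⟩
  by_cases hc : c' = c <;> by_cases hj : j' = j <;> simp [tensorVec, hc, hj]

theorem kronecker_mulVec_tensorVec {l k : Type*} [NonUnitalCommSemiring R] [Fintype m] [Fintype n]
    (A : Matrix l m R) (B : Matrix k n R) (v : m → R) (w : n → R) :
    (A ⊗ₖ B) *ᵥ tensorVec v w = tensorVec (A *ᵥ v) (B *ᵥ w) := by
  ext ⟨a, b⟩
  simp only [tensorVec, mulVec, dotProduct, kroneckerMap_apply, Fintype.sum_prod_type,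
    Finset.sum_mul_sum, mul_mul_mul_comm]

theorem diagonal_mulVec_tensorVec_single [NonAssocSemiring R] [Fintype m] [Fintype n]
    [DecidableEq m] [DecidableEq n] {d : m × n → R} {i : n} (hd : ∀ c, d (c, i) = 1)
    (v : m → R) (a : R) :
    diagonal d *ᵥ tensorVec v (Pi.single i a) = tensorVec v (Pi.single i a) := by
  ext ⟨c, j⟩
  rw [mulVec_diagonal]
  obtain rfl | hj := eq_or_ne j i
  · rw [hd, one_mul]
  · simp [tensorVec, hj]

end TensorVec

theorem pow_mulVec_of_semiconj {R m n : Type*} [Semiring R] [Fintype m] [Fintype n]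
    [DecidableEq m] [DecidableEq n] {A : Matrix m m R} {B : Matrix n n R} {f : (m → R) → n → R}
    (h : Function.Semiconj f (A *ᵥ ·) (B *ᵥ ·)) (k : ℕ) :
    Function.Semiconj f (A ^ k *ᵥ ·) (B ^ k *ᵥ ·) := by
  induction k with
  | zero => simp [Function.Semiconj]
  | succ k ih =>
    simpa only [Function.comp_def, mulVec_mulVec, ← pow_succ'] using h.comp_right ih

section RotationMatrix

/-- The rotation `R(θ)` of the plane by the angle `θ`, with its real entries regarded as complex
numbers so that it acts on a qubit. -/
noncomputable def rotationMatrix (θ : ℝ) : Matrix (Fin 2) (Fin 2) ℂ :=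
  !![(Real.cos θ : ℂ), -(Real.sin θ : ℂ); (Real.sin θ : ℂ), (Real.cos θ : ℂ)]

theorem rotationMatrix_zero : rotationMatrix 0 = 1 := by
  simp [rotationMatrix, one_fin_two]

theorem rotationMatrix_add (α β : ℝ) :
    rotationMatrix (α + β) = rotationMatrix α * rotationMatrix β := by
  ext c c'
  fin_cases c <;> fin_cases c' <;>
    simp [rotationMatrix, Complex.cos_add, Complex.sin_add] <;> ring

theorem rotationMatrix_pow (θ : ℝ) (k : ℕ) : rotationMatrix θ ^ k = rotationMatrix (k * θ) := by
  induction k with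
  | zero => simp [rotationMatrix_zero]
  | succ k ih => rw [pow_succ, ih, ← rotationMatrix_add, Nat.cast_succ, add_one_mul]

theorem rotationMatrix_pi_div_two_mulVec_single_zero :
    rotationMatrix (Real.pi / 2) *ᵥ Pi.single 0 1 = Pi.single 1 1 := by
  ext c
  fin_cases c <;> simp [rotationMatrix]

end RotationMatrix

section BombQuery

variable {ι : Type*} [DecidableEq ι]

/-- The projection `M_x` implementing the controlled bomb query for the hidden string `x`: the
component along `|c, j⟩` is lost (the bomb explodes) exactly when `c = 1` and `x j = true`. -/
def bombQuery (x : ι → Bool) : Matrix (Fin 2 × ι) (Fin 2 × ι) ℂ :=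
  diagonal fun p => if p.1 = 0 ∨ x p.2 = false then 1 else 0

variable [Fintype ι] {x : ι → Bool} {i : ι}

theorem bombQuery_mulVec_tensorVec_single (hx : x i = false) (ψ : Fin 2 → ℂ) (a : ℂ) :
    bombQuery x *ᵥ tensorVec ψ (Pi.single i a) = tensorVec ψ (Pi.single i a) :=
  diagonal_mulVec_tensorVec_single (by simp [hx]) ψ a

theorem bombQuery_mul_kronecker_one_pow_mulVec (hx : x i = false) (U : Matrix (Fin 2) (Fin 2) ℂ)
    (k : ℕ) (ψ : Fin 2 → ℂ) (a : ℂ) :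
    (bombQuery x * (U ⊗ₖ 1)) ^ k *ᵥ tensorVec ψ (Pi.single i a) =
      tensorVec (U ^ k *ᵥ ψ) (Pi.single i a) := by
  have one_step : Function.Semiconj (tensorVec · (Pi.single i a)) (U *ᵥ ·)
      ((bombQuery x * (U ⊗ₖ 1)) *ᵥ ·) := fun φ => by
    simp only [← mulVec_mulVec, kronecker_mulVec_tensorVec, one_mulVec,
      bombQuery_mulVec_tensorVec_single hx]
  exact (pow_mulVec_of_semiconj one_step k ψ).symm

theorem bomb_rotation_on_zero_bit_general {L : ℕ} (hL : 0 < L) (hx : x i = false) :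
    (bombQuery x * (rotationMatrix (Real.pi / (2 * L)) ⊗ₖ 1)) ^ L *ᵥ Pi.single (0, i) 1 =
      Pi.single (1, i) 1 := by
  have total_angle : (L : ℝ) * (Real.pi / (2 * L)) = Real.pi / 2 := by
    field_simp
  have single_eq (c : Fin 2) :
      (Pi.single (c, i) 1 : Fin 2 × ι → ℂ) = tensorVec (Pi.single c 1) (Pi.single i 1) := by
    rw [tensorVec_single_single, mul_one]
  rw [single_eq, single_eq, bombQuery_mul_kronecker_one_pow_mulVec hx, rotationMatrix_pow,
    total_angle, rotationMatrix_pi_div_two_mulVec_single_zero]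

end BombQuery

/-- Zeno effect with the bomb oracle on a zero bit: if `x i = false`, then `L`
applications of `M_x ⬝ (R(θ) ⊗ I_N)` with `θ = π/(2L)` rotate the control qubit,
mapping `|0, i⟩` to `|1, i⟩`. -/
theorem bomb_rotation_on_zero_bit (N L : ℕ) (hN : 0 < N) (hL : 0 < L)
    (x : Fin N → Bool) (i : Fin N) (hx : x i = false) :
    let θ : ℝ := Real.pi / (2 * L)
    let R : Matrix (Fin 2) (Fin 2) ℂ :=
      !![(Real.cos θ : ℂ), -(Real.sin θ : ℂ); (Real.sin θ : ℂ), (Real.cos θ : ℂ)]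
    let M : Matrix (Fin 2 × Fin N) (Fin 2 × Fin N) ℂ :=
      Matrix.diagonal fun p => if p.1 = 0 ∨ x p.2 = false then 1 else 0
    let A : Matrix (Fin 2 × Fin N) (Fin 2 × Fin N) ℂ :=
      M * Matrix.kroneckerMap (· * ·) R (1 : Matrix (Fin N) (Fin N) ℂ)
    (A ^ L).mulVec (Pi.single ((0 : Fin 2), i) (1 : ℂ)) =
      Pi.single ((1 : Fin 2), i) (1 : ℂ) :=
  bomb_rotation_on_zero_bit_general hL hx
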